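/- arXiv:math/9902143 — 2 statements merged into one kernel-verified Lean document; each statement's English description precedes it below -/
import Mathlib

section
/- Let n ≥ 2 and let M be the n²×n² skew-symmetric integer matrix with rows and columns indexed by pairs [i,j], 1 ≤ i,j ≤ n, in lexicographic order, whose entry h_{[i,j],[s,t]} equals s+t-i-j if (s-i)(t-j) ≤ 0, equals s+t-i-j-2 if s > i and t > j, and equals s+t-i-j+2 if s < i and t < j. Then there exists W ∈ SL(n²,ℤ) such that W·M·Wᵗ is the block-diagonal matrix diag(D_1, D_2, …, D_{(n²-n)/2}, 0, …, 0), where D_1 is the 2×2 matrix [[0,1],[-1,0]], D_j is the 2×2 matrix [[0,2],[-2,0]] for j = 2,…,(n²-n)/2, and the remaining n diagonal entries are 0. -/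
open Matrix

noncomputable section

/-- The exponent `h_{[i,j],[s,t]}` of the quasipolynomial algebra `\bar J^0_q(n)`:
`s+t-i-j` if `(s-i)(t-j) ≤ 0`, `s+t-i-j-2` if `s > i` and `t > j`, and `s+t-i-j+2`
if `s < i` and `t < j`. -/
def hJ0 (i j s t : ℕ) : ℤ :=
  if ((s : ℤ) - (i : ℤ)) * ((t : ℤ) - (j : ℤ)) ≤ 0 then (s : ℤ) + t - i - j
  else if i < s ∧ j < t then (s : ℤ) + t - i - j - 2
  else (s : ℤ) + t - i - j + 2

/-- The defining matrix of `\bar J^0_q(n)`: the pair `[i,j]` (0-based) is encoded as the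
index `i·n + j`, which realizes the lexicographic order on pairs. -/
def MJ0 (n : ℕ) : Matrix (Fin (n ^ 2)) (Fin (n ^ 2)) ℤ :=
  Matrix.of fun a b =>
    hJ0 ((a : ℕ) / n) ((a : ℕ) % n) ((b : ℕ) / n) ((b : ℕ) % n)

/-- The canonical form: `diag(D_1, …, D_{(n²-n)/2}, 0, …, 0)` with
`D_1 = [[0,1],[-1,0]]`, `D_j = [[0,2],[-2,0]]` for `j ≥ 2`, and `n` zeros. -/
def DJ0 (n : ℕ) : Matrix (Fin (n ^ 2)) (Fin (n ^ 2)) ℤ :=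
  Matrix.of fun a b =>
    if (a : ℕ) + 1 = (b : ℕ) ∧ (a : ℕ) % 2 = 0 ∧ (b : ℕ) < n ^ 2 - n then
      (if (a : ℕ) = 0 then 1 else 2)
    else if (b : ℕ) + 1 = (a : ℕ) ∧ (b : ℕ) % 2 = 0 ∧ (a : ℕ) < n ^ 2 - n then
      (if (b : ℕ) = 0 then -1 else -2)
    else 0

/-!
View integer vectors of length `n²` as `n × n` grids `X`. The mixed second differences of `M X`
are `2 (X (i, j) - X (i + 1, j + 1))`, and the differences along its first row are twice a column
sum of `X` minus the sum of all entries. Hence the grids that are constant along diagonals and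
periodic with period `n - 1`, with suitably corrected corners, lie in the kernel of `M`, and they
have arbitrary first columns. The same relations modulo `2 d` show that a grid with zero first
column whose image is divisible by `2 d` is divisible by `d`. So `M` has nullity `n`, and whenever
`2 d` divides `M X`, the vector `M X` is `d` times another vector of the image.

The alternating form of `M` takes the value `1` on the unit grids at `(0, 0)` and `(0, 1)`. Since
`h_{[i,j],[s,t]} ≡ (s + t) - (i + j)` modulo `2`, it is `2 C` on their orthogonal complement, and
the divisibility property makes all elementary divisors of `C` units. Splitting hyperbolic planes
off `C` one by one produces the normal form. Its last basis vector is in the radical and can be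
negated, so the change of basis may be taken of determinant `1`.
-/

section AlternatingForms

open Module Module.Basis
open LinearMap (BilinForm)

variable {R V : Type*} [CommRing R] [AddCommGroup V] [Module R V]

/-- The block-diagonal alternating matrix whose `k`-th diagonal block is `[[0, c k], [-c k, 0]]`,
used as a normal form. If `N` is odd, the last row and column vanish. -/
def skewBlocks (N : ℕ) (c : ℕ → R) : Matrix (Fin N) (Fin N) R :=
  Matrix.of fun i j =>
    if (i : ℕ) + 1 = j ∧ (i : ℕ) % 2 = 0 then c (i / 2)
    else if (j : ℕ) + 1 = i ∧ (j : ℕ) % 2 = 0 then -c (j / 2)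
    else 0

/-- The image of `v ↦ B v` is a pure submodule of the dual: a functional `B v` divisible by `d`
is `d` times another functional `B z`. For a form on a free module over a PID this says that all
nonzero elementary divisors of `B` are units. -/
def HasPureRange (B : BilinForm R V) : Prop :=
  ∀ (d : R) (v : V), (∀ w, d ∣ B v w) → ∃ z, B v = d • B z

/-- The orthogonal complement of `{x, y}`; it is only used for pairs with `B x y = 1`, where it
complements the span of `x` and `y`. -/
abbrev pairPerp (B : BilinForm R V) (x y : V) : Submodule R V :=
  B.orthogonal (Submodule.span R {x, y})

theorem mem_pairPerp {B : BilinForm R V} {x y v : V} :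
    v ∈ pairPerp B x y ↔ B x v = 0 ∧ B y v = 0 := by
  refine ⟨fun h => ⟨h x (Submodule.subset_span (by simp)), h y (Submodule.subset_span (by simp))⟩,
    fun ⟨hx, hy⟩ w hw => ?_⟩
  obtain ⟨a, b, rfl⟩ := Submodule.mem_span_pair.1 hw
  simp [hx, hy]

section Pair

variable {B : BilinForm R V} {x y : V}

theorem exists_mem_pairPerp_forall_apply_eq (hB : B.IsAlt) (hxy : B x y = 1) (w : V) :
    ∃ w' ∈ pairPerp B x y, ∀ v ∈ pairPerp B x y, B v w' = B v w := by
  have hyx : B y x = -1 := by rw [← hB.neg_eq, hxy]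
  refine ⟨w + B y w • x - B x w • y, mem_pairPerp.2 ?_, fun v hv => ?_⟩
  · simp [hxy, hyx, hB.self_eq_zero]
  · obtain ⟨hxv, hyv⟩ := mem_pairPerp.1 hv
    simp [← hB.neg_eq x v, ← hB.neg_eq y v, hxv, hyv]

theorem exists_basis_eq_cons_cons (hB : B.IsAlt) (hxy : B x y = 1) {m : ℕ}
    (b' : Basis (Fin m) R (pairPerp B x y)) :
    ∃ b : Basis (Fin (m + 2)) R V,
      ⇑b = (Fin.cons x (Fin.cons y fun i => (b' i : V) : Fin (m + 1) → V) : Fin (m + 2) → V) := by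
  have hyx : B y x = -1 := by rw [← hB.neg_eq, hxy]
  have hle : pairPerp B x y ≤ LinearMap.ker (B y) := fun v hv => (mem_pairPerp.1 hv).2
  let b₁ : Basis (Fin (m + 1)) R (LinearMap.ker (B y)) :=
    mkFinConsOfLE y (hB.self_eq_zero y) b' hle
      (fun c v hv h => by simpa [hxy, (mem_pairPerp.1 hv).1] using congrArg (B x) h)
      (fun z hz => ⟨-B x z, mem_pairPerp.2 <| by
        simp [hxy, hB.self_eq_zero, LinearMap.mem_ker.1 hz]⟩)
  let b : Basis (Fin (m + 2)) R V :=
    mkFinCons x b₁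
      (fun c v hv h => by simpa [hyx, LinearMap.mem_ker.1 hv] using congrArg (B y) h)
      (fun z => ⟨B y z, by simp [hyx]⟩)
  refine ⟨b, ?_⟩
  have hb₁ : (fun i => (b₁ i : V)) = Fin.cons y fun i => (b' i : V) := by
    funext i
    rw [show ⇑b₁ = _ from coe_mkFinConsOfLE ..]
    exact Fin.cases rfl (fun _ => rfl) i
  rw [coe_mkFinCons, ← hb₁]
  rfl

theorem finrank_pairPerp_add_two [IsDomain R] [IsPrincipalIdealRing R] [Module.Free R V]
    [Module.Finite R V] (hB : B.IsAlt) (hxy : B x y = 1) :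
    finrank R (pairPerp B x y) + 2 = finrank R V := by
  obtain ⟨b, -⟩ := exists_basis_eq_cons_cons hB hxy (finBasis R (pairPerp B x y))
  simpa using (finrank_eq_card_basis b).symm

theorem exists_basis_toMatrix_eq_skewBlocks_of_pairPerp (hB : B.IsAlt) (hxy : B x y = 1) {m : ℕ}
    (b' : Basis (Fin m) R (pairPerp B x y)) {c : ℕ → R} (hc : c 0 = 1)
    (hb' : LinearMap.BilinForm.toMatrix b' (B.restrict (pairPerp B x y)) =
      skewBlocks m fun k => c (k + 1)) :
    ∃ b : Basis (Fin (m + 2)) R V, LinearMap.BilinForm.toMatrix b B = skewBlocks (m + 2) c := by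
  have hyx : B y x = -1 := by rw [← hB.neg_eq, hxy]
  have hx (i) : B x (b' i) = 0 := (mem_pairPerp.1 (b' i).2).1
  have hy (i) : B y (b' i) = 0 := (mem_pairPerp.1 (b' i).2).2
  have hx' (i) : B (b' i) x = 0 := by rw [← hB.neg_eq, hx, neg_zero]
  have hy' (i) : B (b' i) y = 0 := by rw [← hB.neg_eq, hy, neg_zero]
  have hb'' (i j) : B (b' i) (b' j) = skewBlocks m (fun k => c (k + 1)) i j := by
    rw [← hb', LinearMap.BilinForm.toMatrix_apply, BilinForm.restrict_apply]
    rfl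
  obtain ⟨b, hb⟩ := exists_basis_eq_cons_cons hB hxy b'
  refine ⟨b, Matrix.ext fun i j => ?_⟩
  rw [LinearMap.BilinForm.toMatrix_apply, hb]
  induction i using Fin.cases with
  | zero =>
    induction j using Fin.cases with
    | zero => simp [hB.self_eq_zero, skewBlocks]
    | succ j => induction j using Fin.cases <;> simp [hxy, hx, hc, skewBlocks]
  | succ i =>
    induction i using Fin.cases with
    | zero =>
      induction j using Fin.cases with
      | zero => simp [hyx, hc, skewBlocks]
      | succ j => induction j using Fin.cases <;> simp [hB.self_eq_zero, hy, skewBlocks]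
    | succ i =>
      induction j using Fin.cases with
      | zero => simp [hx', skewBlocks]
      | succ j =>
        induction j using Fin.cases with
        | zero => simp [hy', skewBlocks]
        | succ j =>
          simp [hb'', skewBlocks, add_assoc, Nat.add_mod_right, Nat.add_div_right]

variable [IsDomain R] {c : R} {C : BilinForm R (pairPerp B x y)}

theorem hasPureRange_of_smul_eq_restrict (hB : B.IsAlt) (hxy : B x y = 1) (hc : c ≠ 0)
    (hC : c • C = B.restrict (pairPerp B x y))
    (hpure : ∀ d v, (∀ w, c * d ∣ B v w) → ∃ z, B v = d • B z) : HasPureRange C := by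
  have hCB (v w : pairPerp B x y) : c * C v w = B v w := LinearMap.congr_fun₂ hC v w
  intro d v hdvd
  obtain ⟨z, hz⟩ := hpure d v fun w => by
    obtain ⟨w', hw', h⟩ := exists_mem_pairPerp_forall_apply_eq hB hxy w
    rw [← h v v.2, ← hCB v ⟨w', hw'⟩]
    exact mul_dvd_mul_left c (hdvd _)
  obtain ⟨z', hz', h⟩ := exists_mem_pairPerp_forall_apply_eq hB hxy z
  refine ⟨⟨z', hz'⟩, LinearMap.ext fun w => mul_left_cancel₀ hc ?_⟩
  calc c * C v w = d * B z w := by rw [hCB, hz]; rfl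
    _ = d * B z' w := by rw [← hB.neg_eq, ← h w w.2, hB.neg_eq]
    _ = c * (d • C ⟨z', hz'⟩) w := by
      rw [← hCB ⟨z', hz'⟩, LinearMap.smul_apply, smul_eq_mul, mul_left_comm]

theorem isAlt_of_smul_eq_restrict (hB : B.IsAlt) (hc : c ≠ 0)
    (hC : c • C = B.restrict (pairPerp B x y)) : C.IsAlt := fun v => by
  have hCB : c * C v v = B v v := LinearMap.congr_fun₂ hC v v
  simpa [hB.self_eq_zero, hc] using hCB

theorem finrank_ker_of_smul_eq_restrict (hB : B.IsAlt) (hxy : B x y = 1) (hc : c ≠ 0)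
    (hC : c • C = B.restrict (pairPerp B x y)) :
    finrank R (LinearMap.ker C) = finrank R (LinearMap.ker B) := by
  have hCB (v w : pairPerp B x y) : c * C v w = B v w := LinearMap.congr_fun₂ hC v w
  have hle : LinearMap.ker B ≤ pairPerp B x y := fun v hv => by
    refine mem_pairPerp.2 ?_
    simp [← hB.neg_eq v, LinearMap.mem_ker.1 hv]
  have hker : LinearMap.ker C = (LinearMap.ker B).comap (pairPerp B x y).subtype := by
    ext v
    simp only [LinearMap.mem_ker, Submodule.mem_comap, Submodule.subtype_apply]
    refine ⟨fun h => LinearMap.ext fun w => ?_, fun h => LinearMap.ext fun w => ?_⟩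
    · obtain ⟨w', hw', hvw⟩ := exists_mem_pairPerp_forall_apply_eq hB hxy w
      rw [← hvw v v.2, ← hCB v ⟨w', hw'⟩, h]
      simp
    · simpa [h, hc] using hCB v w
  rw [hker]
  exact (Submodule.comapSubtypeEquivOfLe hle).finrank_eq

end Pair

theorem exists_specialLinearGroup_mul_toMatrix_mul_transpose {ι : Type*} [Fintype ι]
    [DecidableEq ι] (v b : Basis ι R V) (B : BilinForm R V) (l : ι)
    (hl : ∀ i, B (b l) (b i) = 0) (hl' : ∀ i, B (b i) (b l) = 0) :
    ∃ W : SpecialLinearGroup ι R,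
      (W : Matrix ι ι R) * LinearMap.BilinForm.toMatrix v B * (W : Matrix ι ι R)ᵀ =
        LinearMap.BilinForm.toMatrix b B := by
  -- As `b l` is in the radical, rescaling it changes the determinant but not the Gram matrix.
  obtain ⟨u, hu⟩ := v.isUnit_det b
  let b' : Basis ι R V := b.unitsSMul (Function.update 1 l u⁻¹)
  have hb' : ⇑b' = Function.update b l ((↑u⁻¹ : R) • b l) := by
    ext i
    rcases eq_or_ne i l with rfl | hi <;> simp [b', unitsSMul_apply, Units.smul_def, *]
  have hdet : ((v.toMatrix b')ᵀ).det = 1 := by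
    rw [det_transpose, ← Module.Basis.det_apply, hb', AlternatingMap.map_update_smul,
      Function.update_eq_self, ← hu, smul_eq_mul, Units.inv_mul]
  refine ⟨⟨(v.toMatrix b')ᵀ, hdet⟩, ?_⟩
  rw [transpose_transpose, LinearMap.BilinForm.toMatrix_mul_basis_toMatrix]
  ext i j
  rw [LinearMap.BilinForm.toMatrix_apply, LinearMap.BilinForm.toMatrix_apply, hb']
  by_cases hi : i = l <;> by_cases hj : j = l <;> simp [*]

theorem exists_smul_eq_of_forall_dvd [Module.Free R V] [Module.Finite R V]
    {B : BilinForm R V} {c : R} (h : ∀ v w, c ∣ B v w) : ∃ C : BilinForm R V, c • C = B := by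
  let b := Module.Free.chooseBasis R V
  choose M hM using fun i j => h (b i) (b j)
  refine ⟨Matrix.toBilin b (Matrix.of M),
    (LinearMap.BilinForm.toMatrix b).injective (Matrix.ext fun i j => ?_)⟩
  rw [map_smul, LinearMap.BilinForm.toMatrix_toBilin, LinearMap.BilinForm.toMatrix_apply, hM]
  rfl

theorem HasPureRange.exists_apply_eq_one [IsDomain R] [IsPrincipalIdealRing R]
    {B : BilinForm R V} (hpure : HasPureRange B) (hB : B ≠ 0) : ∃ x y, B x y = 1 := by
  obtain ⟨v, hv⟩ : ∃ v, B v ≠ 0 := not_forall.1 fun h => hB (LinearMap.ext h)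
  obtain ⟨g, hg⟩ := (IsPrincipalIdealRing.principal (LinearMap.range (B v))).principal
  have hg0 : g ≠ 0 := by
    rintro rfl
    exact hv (LinearMap.range_eq_bot.1 (by simpa using hg))
  have hdvd (w) : g ∣ B v w := by
    rw [← Ideal.mem_span_singleton, ← Ideal.submodule_span_eq, ← hg]
    exact LinearMap.mem_range_self (B v) w
  obtain ⟨y, hy⟩ : g ∈ LinearMap.range (B v) := hg ▸ Submodule.mem_span_singleton_self g
  obtain ⟨x, hx⟩ := hpure g v hdvd
  refine ⟨x, y, mul_left_cancel₀ hg0 ?_⟩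
  rw [mul_one, ← smul_eq_mul, ← LinearMap.smul_apply, ← hx, hy]

variable [IsDomain R] [IsPrincipalIdealRing R]

theorem exists_basis_toMatrix_eq_skewBlocks_of_hasPureRange (N : ℕ) :
    ∀ {V : Type*} [AddCommGroup V] [Module R V] [Module.Free R V] [Module.Finite R V]
      {B : BilinForm R V}, B.IsAlt → HasPureRange B → finrank R V = N →
      ∃ r, 2 * r + finrank R (LinearMap.ker B) = N ∧ ∃ b : Basis (Fin N) R V,
        LinearMap.BilinForm.toMatrix b B = skewBlocks N fun k => if k < r then 1 else 0 := by
  induction N using Nat.strong_induction_on with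
  | _ N ih =>
  intro V _ _ _ _ B hB hpure hN
  by_cases hB0 : B = 0
  · subst hB0
    refine ⟨0, by rw [LinearMap.ker_zero, finrank_top, hN, mul_zero, zero_add],
      finBasisOfFinrankEq R V hN, ?_⟩
    ext
    simp [skewBlocks]
  obtain ⟨x, y, hxy⟩ := hpure.exists_apply_eq_one hB0
  have hC : (1 : R) • B.restrict (pairPerp B x y) = B.restrict (pairPerp B x y) := one_smul ..
  have hrank := finrank_pairPerp_add_two hB hxy
  rw [hN] at hrank
  obtain ⟨r, hr, b', hb'⟩ := ih (finrank R (pairPerp B x y)) (by omega)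
    (isAlt_of_smul_eq_restrict hB one_ne_zero hC)
    (hasPureRange_of_smul_eq_restrict hB hxy one_ne_zero hC fun d v h =>
      hpure d v (by simpa using h)) rfl
  rw [finrank_ker_of_smul_eq_restrict hB hxy one_ne_zero hC] at hr
  subst hrank
  exact ⟨r + 1, by omega, exists_basis_toMatrix_eq_skewBlocks_of_pairPerp hB hxy b' (by simp)
    (by simpa using hb')⟩

theorem exists_basis_toMatrix_eq_skewBlocks_of_pair [Module.Free R V] [Module.Finite R V]
    {B : BilinForm R V} (hB : B.IsAlt) {x y : V} (hxy : B x y = 1) {c : R} (hc : c ≠ 0)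
    (hdvd : ∀ v ∈ pairPerp B x y, ∀ w ∈ pairPerp B x y, c ∣ B v w)
    (hpure : ∀ d v, (∀ w, c * d ∣ B v w) → ∃ z, B v = d • B z) {N : ℕ} (hN : finrank R V = N) :
    ∃ r, 2 * (r + 1) + finrank R (LinearMap.ker B) = N ∧ ∃ b : Basis (Fin N) R V,
      LinearMap.BilinForm.toMatrix b B =
        skewBlocks N fun k => if k = 0 then 1 else if k ≤ r then c else 0 := by
  obtain ⟨C, hC⟩ := exists_smul_eq_of_forall_dvd (B := B.restrict (pairPerp B x y))
    fun v w => hdvd v v.2 w w.2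
  obtain ⟨r, hr, b', hb'⟩ := exists_basis_toMatrix_eq_skewBlocks_of_hasPureRange _
    (isAlt_of_smul_eq_restrict hB hc hC)
    (hasPureRange_of_smul_eq_restrict hB hxy hc hC hpure) rfl
  rw [finrank_ker_of_smul_eq_restrict hB hxy hc hC] at hr
  have hrank := finrank_pairPerp_add_two hB hxy
  rw [hN] at hrank
  subst hrank
  refine ⟨r, by omega, exists_basis_toMatrix_eq_skewBlocks_of_pairPerp hB hxy b' (by simp) ?_⟩
  rw [← hC, map_smul, hb']
  refine Matrix.ext fun i j => ?_
  simp only [Matrix.smul_apply, skewBlocks, of_apply, smul_eq_mul, mul_ite, mul_neg, mul_one,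
    mul_zero, Nat.add_eq_zero_iff, one_ne_zero, and_false, if_false, Nat.add_one_le_iff]

end AlternatingForms

section Grid

open Finset

/-- The matrix of the exponents `h_{[i,j],[s,t]}` with rows and columns indexed by pairs; `MJ0 n`
is its lexicographic reindexing. -/
def gridMatrix (n : ℕ) : Matrix (Fin n × Fin n) (Fin n × Fin n) ℤ :=
  Matrix.of fun p q => hJ0 p.1 p.2 q.1 q.2

/-- The alternating form `X, Y ↦ Xᵗ M Y` on `n × n` integer grids. -/
def gridForm (n : ℕ) : LinearMap.BilinForm ℤ (Fin n × Fin n → ℤ) :=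
  Matrix.toBilin' (gridMatrix n)

theorem hJ0_eq (i j s t : ℕ) :
    hJ0 i j s t = (s : ℤ) + t - i - j
      - 2 * (if i < s ∧ j < t then 1 else 0) + 2 * (if s < i ∧ t < j then 1 else 0) := by
  unfold hJ0
  by_cases h : ((s : ℤ) - i) * (t - j) ≤ 0
  · have h₁ : ¬(i < s ∧ j < t) := fun hlt => h.not_gt (mul_pos (by omega) (by omega))
    have h₂ : ¬(s < i ∧ t < j) := fun hlt =>
      h.not_gt (mul_pos_of_neg_of_neg (by omega) (by omega))
    simp [h, h₁, h₂]
  · rcases mul_pos_iff.1 (not_le.1 h) with ⟨hs, ht⟩ | ⟨hs, ht⟩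
    · have h₁ : i < s ∧ j < t := by omega
      simp [h, h₁, h₁.1.not_gt]
    · have h₂ : s < i ∧ t < j := by omega
      simp [h, h₂, h₂.1.not_gt]

theorem hJ0_swap (i j s t : ℕ) : hJ0 j i t s = hJ0 i j s t := by
  simp only [hJ0_eq, and_comm]
  ring

theorem hJ0_mixed_difference (i j s t : ℕ) :
    hJ0 (i + 1) (j + 1) s t - hJ0 i (j + 1) s t - hJ0 (i + 1) j s t + hJ0 i j s t =
      2 * (if s = i ∧ t = j then 1 else 0) - 2 * (if s = i + 1 ∧ t = j + 1 then 1 else 0) := by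
  simp only [hJ0_eq]
  grind (splits := 20)

theorem hJ0_row_difference (j s t : ℕ) :
    hJ0 0 (j + 1) s t - hJ0 0 j s t = 2 * (if s ≠ 0 ∧ t = j + 1 then 1 else 0) - 1 := by
  simp only [hJ0_eq]
  grind

theorem gridMatrix_transpose (n : ℕ) : (gridMatrix n)ᵀ = -gridMatrix n := by
  ext p q
  simp only [gridMatrix, transpose_apply, neg_apply, of_apply, hJ0_eq]
  ring

theorem gridForm_apply {n : ℕ} (X Y : Fin n × Fin n → ℤ) :
    gridForm n X Y = X ⬝ᵥ gridMatrix n *ᵥ Y :=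
  toBilin'_apply' _ _ _

theorem gridForm_single_left {n : ℕ} (p : Fin n × Fin n) (X : Fin n × Fin n → ℤ) :
    gridForm n (Pi.single p 1) X = (gridMatrix n *ᵥ X) p := by
  rw [gridForm_apply, single_one_dotProduct]

theorem isAlt_gridForm (n : ℕ) : (gridForm n).IsAlt := fun X => by
  have h : X ⬝ᵥ gridMatrix n *ᵥ X = -(X ⬝ᵥ gridMatrix n *ᵥ X) := by
    conv_lhs => rw [dotProduct_mulVec, ← mulVec_transpose, gridMatrix_transpose, neg_mulVec,
      neg_dotProduct, dotProduct_comm]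
  rw [gridForm_apply]
  omega

theorem mem_ker_gridForm {n : ℕ} {X : Fin n × Fin n → ℤ} :
    X ∈ LinearMap.ker (gridForm n) ↔ gridMatrix n *ᵥ X = 0 := by
  rw [LinearMap.mem_ker]
  refine ⟨fun h => funext fun p => ?_, fun h => LinearMap.ext fun Y => ?_⟩
  · rw [← gridForm_single_left, ← (isAlt_gridForm n).neg_eq, h]
    simp
  · rw [← (isAlt_gridForm n).neg_eq, gridForm_apply, h]
    simp

section Differences

variable {m : ℕ} (X : Fin (m + 1) × Fin (m + 1) → ℤ)

theorem gridMatrix_mulVec_swap (i j : Fin (m + 1)) :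
    (gridMatrix (m + 1) *ᵥ (X ∘ Prod.swap)) (i, j) = (gridMatrix (m + 1) *ᵥ X) (j, i) := by
  simp only [mulVec, dotProduct, gridMatrix, of_apply]
  rw [← (Equiv.prodComm _ _).sum_comp]
  simp [hJ0_swap]

theorem gridMatrix_mulVec_mixed_difference (i j : Fin m) :
    (gridMatrix (m + 1) *ᵥ X) (i.succ, j.succ) - (gridMatrix (m + 1) *ᵥ X) (i.castSucc, j.succ)
        - (gridMatrix (m + 1) *ᵥ X) (i.succ, j.castSucc)
        + (gridMatrix (m + 1) *ᵥ X) (i.castSucc, j.castSucc) =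
      2 * (X (i.castSucc, j.castSucc) - X (i.succ, j.succ)) := by
  simp only [mulVec, dotProduct, gridMatrix, of_apply, ← sum_sub_distrib, ← sum_add_distrib,
    ← sub_mul, ← add_mul, Fin.val_succ, Fin.val_castSucc, hJ0_mixed_difference]
  have hval (a : Fin (m + 1) × Fin (m + 1)) (q : Fin (m + 1) × Fin (m + 1)) :
      ((q.1 : ℕ) = a.1 ∧ (q.2 : ℕ) = a.2) ↔ q = a := by
    rw [Fin.val_inj, Fin.val_inj, Prod.ext_iff]
  have hc := hval (i.castSucc, j.castSucc)
  have hs := hval (i.succ, j.succ)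
  simp only [Fin.val_castSucc, Fin.val_succ] at hc hs
  simp [hc, hs, sub_mul, mul_sub]

theorem gridMatrix_mulVec_row_difference (j : Fin m) :
    (gridMatrix (m + 1) *ᵥ X) (0, j.succ) - (gridMatrix (m + 1) *ᵥ X) (0, j.castSucc) =
      2 * ∑ s : Fin m, X (s.succ, j.succ) - ∑ q, X q := by
  have hj (t : Fin (m + 1)) : (t : ℕ) = j + 1 ↔ t = j.succ := by
    rw [← Fin.val_succ, Fin.val_inj]
  simp only [mulVec, dotProduct, gridMatrix, of_apply, ← sum_sub_distrib, ← sub_mul, Fin.val_succ,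
    Fin.val_castSucc, Fin.val_zero, hJ0_row_difference, hj]
  simp [sub_mul, Fintype.sum_prod_type, Fin.sum_univ_succ, mul_sum, (Fin.succ_ne_zero j).symm]

theorem gridMatrix_mulVec_zero_last :
    (gridMatrix (m + 1) *ᵥ X) (0, Fin.last m) =
      ∑ q, (((q.1 : ℕ) : ℤ) + (q.2 : ℕ) - m) * X q := by
  refine sum_congr rfl fun q _ => ?_
  simp [gridMatrix, hJ0_eq, Fin.le_last]

end Differences

theorem gridMatrix_mulVec_eq_zero {m : ℕ} {X : Fin (m + 1) × Fin (m + 1) → ℤ}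
    (hdiag : ∀ i j : Fin m, X (i.succ, j.succ) = X (i.castSucc, j.castSucc))
    (hcol : ∀ j : Fin m, 2 * ∑ s : Fin m, X (s.succ, j.succ) = ∑ q, X q)
    (hrow : ∀ i : Fin m, 2 * ∑ t : Fin m, X (i.succ, t.succ) = ∑ q, X q)
    (hcorner : ∑ q, (((q.1 : ℕ) : ℤ) + (q.2 : ℕ) - m) * X q = 0) :
    gridMatrix (m + 1) *ᵥ X = 0 := by
  have hzero_row (j) : (gridMatrix (m + 1) *ᵥ X) (0, j) = 0 := by
    induction j using Fin.reverseInduction with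
    | last => rw [gridMatrix_mulVec_zero_last, hcorner]
    | cast j ih => linarith [gridMatrix_mulVec_row_difference X j, hcol j]
  have hzero_col (i) : (gridMatrix (m + 1) *ᵥ X) (i, 0) = 0 := by
    induction i using Fin.induction with
    | zero => exact hzero_row 0
    | succ i ih =>
      have hdiff := gridMatrix_mulVec_row_difference (X ∘ Prod.swap) i
      have hsum : ∑ q, (X ∘ Prod.swap) q = ∑ q, X q := (Equiv.prodComm _ _).sum_comp X
      rw [gridMatrix_mulVec_swap, gridMatrix_mulVec_swap, hsum, ih] at hdiff
      exact (sub_zero _).symm.trans (hdiff.trans (sub_eq_zero.2 (hrow i)))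
  funext ⟨i, j⟩
  induction i using Fin.induction generalizing j with
  | zero => exact hzero_row j
  | succ i ih =>
    induction j using Fin.induction with
    | zero => exact hzero_col i.succ
    | succ j ih' =>
      have hdiff := gridMatrix_mulVec_mixed_difference X i j
      rw [hdiag] at hdiff
      have h₁ := ih j.succ
      have h₂ := ih j.castSucc
      simp only [Pi.zero_apply] at *
      linarith

/-- The grid `X (s, t) = p (s - t) + a [(s, t) = (m, 0)] + b [(s, t) = (0, m)]` for a function `p`
of period `m`: constant along the diagonals and `m`-periodic, except at the two corners. The
kernel of the form consists of such grids. -/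
def periodicGrid {m : ℕ} (p : ZMod m → ℤ) (a b : ℤ) (q : Fin (m + 1) × Fin (m + 1)) : ℤ :=
  p ((q.1 : ℕ) - (q.2 : ℕ)) + (if q = (Fin.last m, 0) then a else 0) +
    (if q = (0, Fin.last m) then b else 0)

section PeriodicGrid

variable {m : ℕ} (p : ZMod m → ℤ) (a b : ℤ)

theorem periodicGrid_swap (i j : Fin (m + 1)) :
    periodicGrid p a b (i, j) = periodicGrid (fun x => p (-x)) b a (j, i) := by
  simp only [periodicGrid, neg_sub, Prod.mk.injEq, and_comm]
  ring

theorem periodicGrid_castSucc_castSucc (i j : Fin m) :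
    periodicGrid p a b (i.castSucc, j.castSucc) = p ((i : ℕ) - (j : ℕ)) := by
  simp [periodicGrid, Fin.ext_iff, i.2.ne, j.2.ne]

theorem periodicGrid_succ_succ (i j : Fin m) :
    periodicGrid p a b (i.succ, j.succ) = p ((i : ℕ) - (j : ℕ)) := by
  simp [periodicGrid]

theorem sum_weight_mul_periodicGrid :
    ∑ q : Fin (m + 1) × Fin (m + 1),
      (((q.1 : ℕ) : ℤ) + (q.2 : ℕ) - m) * periodicGrid p a b q = 0 := by
  -- Reflection in the antidiagonal preserves the grid and negates the weight.
  let e : Fin (m + 1) × Fin (m + 1) ≃ Fin (m + 1) × Fin (m + 1) :=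
    (Equiv.prodComm _ _).trans (Fin.revPerm.prodCongr Fin.revPerm)
  have hneg : ∀ q : Fin (m + 1) × Fin (m + 1),
      (((e q).1 : ℕ) + ((e q).2 : ℕ) - (m : ℤ)) * periodicGrid p a b (e q) =
        -((((q.1 : ℕ) : ℤ) + (q.2 : ℕ) - m) * periodicGrid p a b q) := by
    rintro ⟨i, j⟩
    have hi := Fin.is_le i
    have hj := Fin.is_le j
    have hp : periodicGrid p a b (j.rev, i.rev) = periodicGrid p a b (i, j) := by
      simp [periodicGrid, Fin.val_rev, Nat.cast_sub, hi, hj, Fin.rev_eq_iff, and_comm,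
        neg_add_eq_sub]
    simp only [e, Equiv.trans_apply, Equiv.prodComm_apply, Prod.swap_prod_mk,
      Equiv.prodCongr_apply, Prod.map_apply, Fin.revPerm_apply, hp, Fin.val_rev]
    rw [Nat.add_sub_add_right, Nat.add_sub_add_right, Nat.cast_sub hi, Nat.cast_sub hj]
    ring
  have hsum := e.sum_comp fun q : Fin (m + 1) × Fin (m + 1) =>
    (((q.1 : ℕ) : ℤ) + (q.2 : ℕ) - m) * periodicGrid p a b q
  rw [sum_congr rfl fun q _ => hneg q, sum_neg_distrib] at hsum
  omega

variable [NeZero m]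

theorem sum_fin_natCast_zmod {M : Type*} [AddCommMonoid M] (f : ZMod m → M) :
    ∑ i : Fin m, f (i : ℕ) = ∑ x, f x := by
  obtain ⟨k, rfl⟩ := Nat.exists_eq_succ_of_ne_zero (NeZero.ne m)
  exact sum_congr rfl fun i _ => congrArg f (Fin.cast_val_eq_self i)

theorem sum_periodicGrid_succ_left (j : Fin m) :
    ∑ s : Fin m, periodicGrid p a b (s.succ, j.succ) = ∑ x, p x := by
  simp only [periodicGrid_succ_succ]
  rw [sum_fin_natCast_zmod fun x : ZMod m => p (x - ((j : ℕ) : ZMod m))]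
  exact (Equiv.subRight ((j : ℕ) : ZMod m)).sum_comp p

theorem sum_periodicGrid_succ_right (i : Fin m) :
    ∑ t : Fin m, periodicGrid p a b (i.succ, t.succ) = ∑ x, p x := by
  simp only [periodicGrid_swap p]
  rw [sum_periodicGrid_succ_left]
  exact Equiv.sum_comp (Equiv.neg (ZMod m)) p

theorem sum_periodicGrid :
    ∑ q, periodicGrid p a b q = a + b + p 0 + (m + 2) * ∑ x, p x := by
  have hcol (t : ZMod m) : ∑ s : Fin (m + 1), p ((s : ℕ) - t) = ∑ x, p x + p (-t) := by
    rw [Fin.sum_univ_castSucc, Fin.val_last, ZMod.natCast_self, zero_sub]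
    exact congrArg (· + p (-t)) <| (sum_fin_natCast_zmod fun x => p (x - t)).trans
      ((Equiv.subRight t).sum_comp p)
  have hneg : ∑ t : Fin (m + 1), p (-(t : ℕ)) = ∑ x, p x + p 0 := by
    rw [Fin.sum_univ_castSucc, Fin.val_last, ZMod.natCast_self, neg_zero]
    exact congrArg (· + p 0) <| (sum_fin_natCast_zmod fun x => p (-x)).trans
      (Equiv.sum_comp (Equiv.neg (ZMod m)) p)
  have hdiag : ∑ q : Fin (m + 1) × Fin (m + 1), p ((q.1 : ℕ) - (q.2 : ℕ)) =
      (m + 2) * ∑ x, p x + p 0 := by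
    simp only [Fintype.sum_prod_type_right, hcol, sum_add_distrib, hneg, sum_const, card_univ,
      Fintype.card_fin, nsmul_eq_mul]
    push_cast
    ring
  simp only [periodicGrid, sum_add_distrib, hdiag, sum_ite_eq', mem_univ, if_true]
  ring

theorem gridMatrix_mulVec_periodicGrid (h : a + b + p 0 + m * ∑ x, p x = 0) :
    gridMatrix (m + 1) *ᵥ periodicGrid p a b = 0 := by
  refine gridMatrix_mulVec_eq_zero (fun i j => ?_) (fun j => ?_) (fun i => ?_)
    (sum_weight_mul_periodicGrid p a b)
  · rw [periodicGrid_succ_succ, periodicGrid_castSucc_castSucc]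
  · rw [sum_periodicGrid_succ_left, sum_periodicGrid]
    linarith
  · rw [sum_periodicGrid_succ_right, sum_periodicGrid]
    linarith
end PeriodicGrid

theorem exists_gridMatrix_mulVec_eq_zero {k : ℕ} (t : Fin (k + 2) → ℤ) :
    ∃ Z, gridMatrix (k + 2) *ᵥ Z = 0 ∧ ∀ i, Z (i, 0) = t i := by
  let p : ZMod (k + 1) → ℤ := fun x => t (Fin.castSucc x)
  let a := t (Fin.last (k + 1)) - t 0
  let b := -(a + p 0 + (k + 1 : ℕ) * ∑ x, p x)
  refine ⟨periodicGrid p a b, gridMatrix_mulVec_periodicGrid p a b (by simp only [b]; ring),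
    fun i => ?_⟩
  induction i using Fin.lastCases with
  | last =>
    have hp : p 0 = t 0 := rfl
    simp [periodicGrid, a, hp]
  | cast i =>
    have hi : p (i : ℕ) = t i.castSucc := congrArg p (Fin.cast_val_eq_self i)
    simp [periodicGrid, hi]

section Divisibility

variable {k : ℕ} {d : ℤ} {X : Fin (k + 2) × Fin (k + 2) → ℤ}

theorem dvd_succ_succ_iff_of_dvd_mulVec
    (h : ∀ p, 2 * d ∣ (gridMatrix (k + 2) *ᵥ X) p) (i j : Fin (k + 1)) :
    d ∣ X (i.succ, j.succ) ↔ d ∣ X (i.castSucc, j.castSucc) := by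
  have hdvd : 2 * d ∣ 2 * (X (i.castSucc, j.castSucc) - X (i.succ, j.succ)) := by
    rw [← gridMatrix_mulVec_mixed_difference]
    exact dvd_add (dvd_sub (dvd_sub (h _) (h _)) (h _)) (h _)
  exact (dvd_iff_dvd_of_dvd_sub (Int.dvd_of_mul_dvd_mul_left two_ne_zero hdvd)).symm

theorem dvd_apply_of_snd_le_fst
    (h : ∀ p, 2 * d ∣ (gridMatrix (k + 2) *ᵥ X) p) (h₀ : ∀ i, d ∣ X (i, 0))
    {i j : Fin (k + 2)} (hij : j ≤ i) : d ∣ X (i, j) := by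
  induction j using Fin.induction generalizing i with
  | zero => exact h₀ i
  | succ j ih =>
    obtain ⟨i, rfl⟩ := Fin.exists_succ_eq.2 ((Fin.succ_pos j).trans_le hij).ne'
    exact (dvd_succ_succ_iff_of_dvd_mulVec h i j).2 (ih (by simpa using hij))

theorem two_mul_dvd_sum_of_dvd_mulVec
    (h : ∀ p, 2 * d ∣ (gridMatrix (k + 2) *ᵥ X) p) (h₀ : ∀ i, d ∣ X (i, 0)) :
    2 * d ∣ ∑ q, X q := by
  have hdiff := gridMatrix_mulVec_row_difference X 0
  have hcol : 2 * d ∣ 2 * ∑ s : Fin (k + 1), X (s.succ, Fin.succ 0) :=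
    mul_dvd_mul_left 2 (dvd_sum fun s _ => dvd_apply_of_snd_le_fst h h₀ (by simp [Fin.le_def]))
  rw [← dvd_sub_right hcol, ← hdiff]
  exact dvd_sub (h _) (h _)

theorem dvd_sum_succ_of_dvd_mulVec
    (h : ∀ p, 2 * d ∣ (gridMatrix (k + 2) *ᵥ X) p) (h₀ : ∀ i, d ∣ X (i, 0))
    (j : Fin (k + 1)) : d ∣ ∑ s : Fin (k + 1), X (s.succ, j.succ) := by
  have hdvd : 2 * d ∣ 2 * ∑ s : Fin (k + 1), X (s.succ, j.succ) := by
    rw [← dvd_sub_left (two_mul_dvd_sum_of_dvd_mulVec h h₀), ← gridMatrix_mulVec_row_difference]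
    exact dvd_sub (h _) (h _)
  exact Int.dvd_of_mul_dvd_mul_left two_ne_zero hdvd

theorem dvd_apply_of_snd_le_fst_add
    (h : ∀ p, 2 * d ∣ (gridMatrix (k + 2) *ᵥ X) p) (h₀ : ∀ i, d ∣ X (i, 0))
    (l : ℕ) (hl : l ≤ k) {i j : Fin (k + 2)} (hij : (j : ℕ) ≤ i + l) : d ∣ X (i, j) := by
  induction l generalizing i j with
  | zero => exact dvd_apply_of_snd_le_fst h h₀ hij
  | succ l ih =>
    have ih' {i j : Fin (k + 2)} (hij : (j : ℕ) ≤ i + l) : d ∣ X (i, j) := ih (by omega) hij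
    -- The column sum of `dvd_sum_succ_of_dvd_mulVec` has only one entry on the new diagonal.
    let c : Fin (k + 1) := ⟨l + 1, by omega⟩
    have hc : d ∣ X (Fin.castSucc 0, c.castSucc) := by
      rw [← dvd_succ_succ_iff_of_dvd_mulVec h]
      have hsum := dvd_sum_succ_of_dvd_mulVec h h₀ c
      rw [Fin.sum_univ_succ] at hsum
      refine (dvd_add_left (dvd_sum fun s _ => ih' ?_)).1 hsum
      simp only [Fin.val_succ, c]
      omega
    have hdiag (i j : Fin (k + 2)) (hij : (j : ℕ) = i + (l + 1)) : d ∣ X (i, j) := by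
      induction i using Fin.induction generalizing j with
      | zero => rwa [show j = c.castSucc from Fin.ext (by simpa using hij)]
      | succ i hi =>
        obtain ⟨j, rfl⟩ := Fin.exists_succ_eq.2 (show j ≠ 0 by rintro rfl; simp at hij)
        refine (dvd_succ_succ_iff_of_dvd_mulVec h i j).2 (hi _ ?_)
        simp only [Fin.val_succ, Fin.val_castSucc] at hij ⊢
        omega
    rcases Nat.le_or_eq_of_le_succ hij with hij | hij
    exacts [ih' hij, hdiag i j hij]

theorem dvd_apply_of_dvd_mulVec (h : ∀ p, 2 * d ∣ (gridMatrix (k + 2) *ᵥ X) p)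
    (h₀ : ∀ i, d ∣ X (i, 0)) (p) : d ∣ X p := by
  let c : Fin (k + 2) × Fin (k + 2) := (0, Fin.last _)
  have hne (q) (hq : q ≠ c) : d ∣ X q :=
    dvd_apply_of_snd_le_fst_add h h₀ k le_rfl (not_lt.1 fun hlt => hq (Prod.ext
      (Fin.ext (by rw [Fin.val_zero]; omega)) (Fin.ext (by rw [Fin.val_last]; omega))))
  rcases eq_or_ne p c with rfl | hp
  · have hsum := (dvd_mul_left d 2).trans (two_mul_dvd_sum_of_dvd_mulVec h h₀)
    rw [← add_sum_erase _ _ (mem_univ c)] at hsum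
    exact (dvd_add_left (dvd_sum fun q hq => hne q (ne_of_mem_erase hq))).1 hsum
  · exact hne p hp

end Divisibility

theorem exists_gridForm_eq_smul {k : ℕ} (d : ℤ) (X : Fin (k + 2) × Fin (k + 2) → ℤ)
    (h : ∀ Y, 2 * d ∣ gridForm (k + 2) X Y) :
    ∃ Z, gridForm (k + 2) X = d • gridForm (k + 2) Z := by
  obtain ⟨K, hK, hK₀⟩ := exists_gridMatrix_mulVec_eq_zero fun i => X (i, 0)
  have hdvd (p) : d ∣ (X - K) p := by
    refine dvd_apply_of_dvd_mulVec (fun p => ?_) (by simp [hK₀]) p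
    rw [mulVec_sub, hK, sub_zero, ← gridForm_single_left, ← (isAlt_gridForm _).neg_eq, dvd_neg]
    exact h _
  choose Z hZ using hdvd
  have hX : X = d • Z + K := by
    rw [← sub_eq_iff_eq_add]
    exact funext hZ
  refine ⟨Z, ?_⟩
  rw [hX, map_add, mem_ker_gridForm.2 hK, add_zero, map_smul]

theorem finrank_ker_gridForm (k : ℕ) :
    Module.finrank ℤ (LinearMap.ker (gridForm (k + 2))) = k + 2 := by
  let firstColumn : LinearMap.ker (gridForm (k + 2)) →ₗ[ℤ] Fin (k + 2) → ℤ :=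
    (LinearMap.funLeft ℤ ℤ fun i => (i, 0)).domRestrict _
  have hbij : Function.Bijective firstColumn := by
    refine ⟨(injective_iff_map_eq_zero _).2 fun X hX => Subtype.ext (funext fun p => ?_),
      fun t => ?_⟩
    · refine zero_dvd_iff.1 (dvd_apply_of_dvd_mulVec (fun p => ?_) (fun i => ?_) p)
      · simp [mem_ker_gridForm.1 X.2]
      · exact zero_dvd_iff.2 (congrFun hX i)
    · obtain ⟨Z, hZ, hZt⟩ := exists_gridMatrix_mulVec_eq_zero t
      exact ⟨⟨Z, mem_ker_gridForm.2 hZ⟩, funext hZt⟩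
  rw [(LinearEquiv.ofBijective firstColumn hbij).finrank_eq, Module.finrank_fin_fun]

theorem two_dvd_hJ0_sub (i j s t : ℕ) : 2 ∣ hJ0 i j s t - ((s + t : ℤ) - (i + j)) := by
  refine ⟨(if s < i ∧ t < j then 1 else 0) - (if i < s ∧ j < t then 1 else 0), ?_⟩
  rw [hJ0_eq]
  ring

theorem two_dvd_gridMatrix_mulVec_sub {n : ℕ} (X : Fin n × Fin n → ℤ) (p : Fin n × Fin n) :
    2 ∣ (gridMatrix n *ᵥ X) p -
      (∑ q, (((q.1 : ℕ) + (q.2 : ℕ) : ℤ)) * X q - ((p.1 : ℕ) + (p.2 : ℕ)) * ∑ q, X q) := by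
  rw [mulVec, dotProduct, mul_sum, ← sum_sub_distrib, ← sum_sub_distrib]
  refine dvd_sum fun q _ => ?_
  rw [← sub_mul, ← sub_mul]
  exact (two_dvd_hJ0_sub _ _ _ _).mul_right _

theorem two_dvd_gridMatrix_mulVec {k : ℕ} {X : Fin (k + 2) × Fin (k + 2) → ℤ}
    (h₀ : (gridMatrix (k + 2) *ᵥ X) (0, 0) = 0) (h₁ : (gridMatrix (k + 2) *ᵥ X) (0, 1) = 0)
    (p) : 2 ∣ (gridMatrix (k + 2) *ᵥ X) p := by
  have hheight : 2 ∣ ∑ q, (((q.1 : ℕ) + (q.2 : ℕ) : ℤ)) * X q := by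
    simpa [h₀] using two_dvd_gridMatrix_mulVec_sub X (0, 0)
  have hsum : 2 ∣ ∑ q, X q := by
    have hdvd := two_dvd_gridMatrix_mulVec_sub X (0, 1)
    rw [h₁, zero_sub, dvd_neg, dvd_sub_right hheight] at hdvd
    simpa using hdvd
  exact (dvd_iff_dvd_of_dvd_sub (two_dvd_gridMatrix_mulVec_sub X p)).2
    (dvd_sub hheight (hsum.mul_left _))

theorem gridForm_single_zero_zero_single_zero_one (k : ℕ) :
    gridForm (k + 2) (Pi.single (0, 0) 1) (Pi.single (0, 1) 1) = 1 := by
  rw [gridForm, toBilin'_single]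
  simp [gridMatrix, hJ0]

theorem two_dvd_gridForm_of_mem_pairPerp {k : ℕ} (X : Fin (k + 2) × Fin (k + 2) → ℤ)
    {Y : Fin (k + 2) × Fin (k + 2) → ℤ}
    (hY : Y ∈ pairPerp (gridForm (k + 2)) (Pi.single (0, 0) 1) (Pi.single (0, 1) 1)) :
    2 ∣ gridForm (k + 2) X Y := by
  obtain ⟨h₀, h₁⟩ := mem_pairPerp.1 hY
  rw [gridForm_single_left] at h₀ h₁
  rw [gridForm_apply]
  exact dvd_sum fun p _ => (two_dvd_gridMatrix_mulVec h₀ h₁ p).mul_left _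

end Grid

section NormalForm

open Module

/-- The standard basis of the grids, enumerated in the lexicographic order of `MJ0`. -/
def lexBasis (n : ℕ) : Basis (Fin (n ^ 2)) ℤ (Fin n × Fin n → ℤ) :=
  (Pi.basisFun ℤ (Fin n × Fin n)).reindex (finProdFinEquiv.trans (finCongr (sq n).symm))

theorem toMatrix_lexBasis_gridForm (n : ℕ) :
    LinearMap.BilinForm.toMatrix (lexBasis n) (gridForm n) = MJ0 n := by
  ext a b
  rw [LinearMap.BilinForm.toMatrix_apply, lexBasis, Basis.reindex_apply, Basis.reindex_apply,
    Pi.basisFun_apply, Pi.basisFun_apply, gridForm, toBilin'_single]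
  rfl

theorem skewBlocks_eq_DJ0 {n r : ℕ} (hr : 2 * (r + 1) + n = n ^ 2) :
    skewBlocks (n ^ 2) (fun k => if k = 0 then 1 else if k ≤ r then 2 else 0) = DJ0 n := by
  ext i j
  simp only [skewBlocks, DJ0, of_apply]
  generalize n ^ 2 = N at *
  grind

theorem exists_basis_toMatrix_gridForm_eq_DJ0 (k : ℕ) :
    ∃ b : Basis (Fin ((k + 2) ^ 2)) ℤ (Fin (k + 2) × Fin (k + 2) → ℤ),
      LinearMap.BilinForm.toMatrix b (gridForm (k + 2)) = DJ0 (k + 2) := by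
  obtain ⟨r, hr, b, hb⟩ := exists_basis_toMatrix_eq_skewBlocks_of_pair (isAlt_gridForm (k + 2))
    (gridForm_single_zero_zero_single_zero_one k) two_ne_zero
    (fun X _ Y hY => two_dvd_gridForm_of_mem_pairPerp X hY) exists_gridForm_eq_smul
    (N := (k + 2) ^ 2) (by simp [sq])
  rw [finrank_ker_gridForm] at hr
  exact ⟨b, hb.trans (skewBlocks_eq_DJ0 hr)⟩

end NormalForm

theorem stmt4 (n : ℕ) (hn : 2 ≤ n) :
    ∃ W : Matrix.SpecialLinearGroup (Fin (n ^ 2)) ℤ,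
      (W : Matrix (Fin (n ^ 2)) (Fin (n ^ 2)) ℤ) * MJ0 n *
          (W : Matrix (Fin (n ^ 2)) (Fin (n ^ 2)) ℤ)ᵀ =
        DJ0 n := by
  obtain ⟨k, rfl⟩ := Nat.exists_eq_add_of_le' hn
  obtain ⟨b, hb⟩ := exists_basis_toMatrix_gridForm_eq_DJ0 k
  let l : Fin ((k + 2) ^ 2) := ⟨(k + 2) ^ 2 - 1, by simp⟩
  have hl (i) : gridForm (k + 2) (b l) (b i) = 0 := by
    rw [← LinearMap.BilinForm.toMatrix_apply, hb]
    simp only [DJ0, of_apply, l]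
    grind
  obtain ⟨W, hW⟩ := exists_specialLinearGroup_mul_toMatrix_mul_transpose (lexBasis (k + 2)) b
    (gridForm (k + 2)) l hl fun i => by rw [← (isAlt_gridForm _).neg_eq, hl, neg_zero]
  exact ⟨W, by rw [← hb, ← hW, toMatrix_lexBasis_gridForm]⟩
end
end

section
/- Let q ∈ ℂ, q ≠ 0, and let A_2 be the quantum plane, the ℂ-algebra with generators x, y and relation yx = qxy. Then there is an injective homomorphism of unital ℂ-algebras φ : J^0_q(n) → A_2 ⊗_ℂ J^z_q(n) with φ(J_{i,j}) = x^{i+j}y ⊗ M_{i,j} for all 1 ≤ i,j ≤ n; in other words, the elements x^{i+j}y ⊗ M_{i,j} of A_2 ⊗ J^z_q(n) generate a subalgebra isomorphic to J^0_q(n) via J_{i,j} ↦ x^{i+j}y ⊗ M_{i,j}. -/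
noncomputable section

/-- The defining relations of `J^0_q(n)`:
`J_{i,j} J_{s,t} = q^{s+t-i-j} J_{s,t} J_{i,j}` whenever `(s-i)(t-j) ≤ 0`, and
`q^{1-t+j} J_{i,j} J_{s,t} = q^{s-i-1} J_{s,t} J_{i,j} + (q-q⁻¹) J_{i,t} J_{s,j}`
whenever `s > i` and `t > j` (0-based indices; all index differences agree with 1-based ones). -/
inductive J0Rel (n : ℕ) (q : ℂ) :
    FreeAlgebra ℂ (Fin n × Fin n) → FreeAlgebra ℂ (Fin n × Fin n) → Prop
  | comm (i j s t : Fin n)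
      (h : (((s : ℕ) : ℤ) - ((i : ℕ) : ℤ)) * (((t : ℕ) : ℤ) - ((j : ℕ) : ℤ)) ≤ 0) :
      J0Rel n q (FreeAlgebra.ι ℂ (i, j) * FreeAlgebra.ι ℂ (s, t))
        (q ^ (((s : ℕ) : ℤ) + ((t : ℕ) : ℤ) - ((i : ℕ) : ℤ) - ((j : ℕ) : ℤ)) •
          (FreeAlgebra.ι ℂ (s, t) * FreeAlgebra.ι ℂ (i, j)))
  | cross (i j s t : Fin n) (hs : i < s) (ht : j < t) :
      J0Rel n q
        (q ^ ((1 : ℤ) - ((t : ℕ) : ℤ) + ((j : ℕ) : ℤ)) •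
          (FreeAlgebra.ι ℂ (i, j) * FreeAlgebra.ι ℂ (s, t)))
        (q ^ (((s : ℕ) : ℤ) - ((i : ℕ) : ℤ) - 1) •
            (FreeAlgebra.ι ℂ (s, t) * FreeAlgebra.ι ℂ (i, j)) +
          (q - q⁻¹) • (FreeAlgebra.ι ℂ (i, t) * FreeAlgebra.ι ℂ (s, j)))

/-- The algebra `J^0_q(n)`. -/
abbrev J0Alg (n : ℕ) (q : ℂ) := RingQuot (J0Rel n q)

/-- The generator `J_{i,j}` (0-based indices). -/
def jgen (n : ℕ) (q : ℂ) (i j : Fin n) : J0Alg n q :=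
  RingQuot.mkAlgHom ℂ (J0Rel n q) (FreeAlgebra.ι ℂ (i, j))

/-- The defining relations of `J^z_q(n)`:
`M_{i,j} M_{s,t} = M_{s,t} M_{i,j}` whenever `(s-i)(t-j) ≤ 0`, and
`q M_{i,j} M_{s,t} = q⁻¹ M_{s,t} M_{i,j} + (q-q⁻¹) M_{i,t} M_{s,j}` whenever `i < s`, `j < t`. -/
inductive JzRel (n : ℕ) (q : ℂ) :
    FreeAlgebra ℂ (Fin n × Fin n) → FreeAlgebra ℂ (Fin n × Fin n) → Prop
  | comm (i j s t : Fin n)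
      (h : (((s : ℕ) : ℤ) - ((i : ℕ) : ℤ)) * (((t : ℕ) : ℤ) - ((j : ℕ) : ℤ)) ≤ 0) :
      JzRel n q (FreeAlgebra.ι ℂ (i, j) * FreeAlgebra.ι ℂ (s, t))
        (FreeAlgebra.ι ℂ (s, t) * FreeAlgebra.ι ℂ (i, j))
  | cross (i j s t : Fin n) (hs : i < s) (ht : j < t) :
      JzRel n q (q • (FreeAlgebra.ι ℂ (i, j) * FreeAlgebra.ι ℂ (s, t)))
        (q⁻¹ • (FreeAlgebra.ι ℂ (s, t) * FreeAlgebra.ι ℂ (i, j)) +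
          (q - q⁻¹) • (FreeAlgebra.ι ℂ (i, t) * FreeAlgebra.ι ℂ (s, j)))

/-- The algebra `J^z_q(n)`. -/
abbrev JzAlg (n : ℕ) (q : ℂ) := RingQuot (JzRel n q)

/-- The generator `M_{i,j}` (0-based indices). -/
def mgen (n : ℕ) (q : ℂ) (i j : Fin n) : JzAlg n q :=
  RingQuot.mkAlgHom ℂ (JzRel n q) (FreeAlgebra.ι ℂ (i, j))

/-- The defining relation of the quantum plane `A_2`: `y x = q x y`. -/
inductive PlaneRel (q : ℂ) : FreeAlgebra ℂ (Fin 2) → FreeAlgebra ℂ (Fin 2) → Prop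
  | rel : PlaneRel q (FreeAlgebra.ι ℂ 1 * FreeAlgebra.ι ℂ 0)
      (q • (FreeAlgebra.ι ℂ 0 * FreeAlgebra.ι ℂ 1))

/-- The quantum plane `A_2`. -/
abbrev QPlane (q : ℂ) := RingQuot (PlaneRel q)

/-- The generator `x` of the quantum plane. -/
def qpx (q : ℂ) : QPlane q := RingQuot.mkAlgHom ℂ (PlaneRel q) (FreeAlgebra.ι ℂ 0)

/-- The generator `y` of the quantum plane. -/
def qpy (q : ℂ) : QPlane q := RingQuot.mkAlgHom ℂ (PlaneRel q) (FreeAlgebra.ι ℂ 1)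

open scoped TensorProduct

/-! `J^0_q(n)` is a twist of `J^z_q(n)` by the grading in which the generator with indices `(i, j)`
has degree `i + j`: passing to `x^{i+j}y ⊗ M_{i,j}` multiplies each product of two generators by
the power of `q` by which the two sets of relations differ.

Injectivity comes from a representation. Let `σ_c` be the endomorphism of `J^0_q(n)` scaling each
generator by `c` to its degree. The quantum plane acts on functions `ℂ → J^0_q(n)` by `q`-difference
operators, `(x f)(c) = c f(c)` and `(y f)(c) = f(qc)`, and `J^z_q(n)` acts on values by letting
`M_{i,j}` be `r ↦ J_{i,j} σ_{q⁻¹}(r)`. The two actions commute, and `x^{i+j}y ⊗ M_{i,j}` maps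
`c ↦ σ_c(r)` to `c ↦ σ_c(J_{i,j} r)`. Hence the image of `r` maps `c ↦ σ_c(1)` to `c ↦ σ_c(r)`,
whose value at `c = 1` is `r`. -/

theorem adjoin_range_mkAlgHom_ι {R X : Type*} [CommSemiring R]
    (r : FreeAlgebra R X → FreeAlgebra R X → Prop) :
    Algebra.adjoin R (Set.range fun x => RingQuot.mkAlgHom R r (FreeAlgebra.ι R x)) = ⊤ := by
  rw [← (AlgHom.range_eq_top _).mpr (RingQuot.mkAlgHom_surjective R r), ← Algebra.map_top,
    ← FreeAlgebra.adjoin_range_ι, AlgHom.map_adjoin, ← Set.range_comp, Function.comp_def]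

namespace QPlane

theorem qpy_mul_qpx (q : ℂ) : qpy q * qpx q = q • (qpx q * qpy q) := by
  simpa only [qpx, qpy, map_mul, map_smul] using
    RingQuot.mkAlgHom_rel ℂ (PlaneRel.rel (q := q))

theorem qpy_mul_qpx_pow (q : ℂ) (b : ℕ) :
    qpy q * qpx q ^ b = q ^ b • (qpx q ^ b * qpy q) := by
  induction b with
  | zero => simp
  | succ b ih =>
    rw [pow_succ, ← mul_assoc, ih, smul_mul_assoc, mul_assoc, qpy_mul_qpx, mul_smul_comm, smul_smul,
      ← pow_succ, mul_assoc]

theorem qpx_pow_mul_qpy_mul (q : ℂ) (a b : ℕ) :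
    qpx q ^ a * qpy q * (qpx q ^ b * qpy q) = q ^ b • (qpx q ^ (a + b) * qpy q ^ 2) := by
  rw [mul_assoc, ← mul_assoc (qpy q), qpy_mul_qpx_pow, smul_mul_assoc, mul_smul_comm, pow_add, sq]
  simp only [mul_assoc]

section Lift

variable {E : Type*} [Semiring E] [Algebra ℂ E] {q : ℂ} {x y : E}

/-- The universal property of the quantum plane: the homomorphism sending its generators to a
pair `x`, `y` of elements that satisfies the defining relation. -/
def lift (h : y * x = q • (x * y)) : QPlane q →ₐ[ℂ] E :=
  RingQuot.liftAlgHom ℂ ⟨FreeAlgebra.lift ℂ ![x, y], by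
    rintro _ _ ⟨⟩
    simpa using h⟩

@[simp]
theorem lift_qpx (h : y * x = q • (x * y)) : lift h (qpx q) = x := by
  simp [lift, qpx]

@[simp]
theorem lift_qpy (h : y * x = q • (x * y)) : lift h (qpy q) = y := by
  simp [lift, qpy]

theorem commute_lift (h : y * x = q • (x * y)) {e : E} (hx : Commute x e) (hy : Commute y e)
    (a : QPlane q) : Commute (lift h a) e := by
  have ha : a ∈ Algebra.adjoin ℂ _ := adjoin_range_mkAlgHom_ι (PlaneRel q) ▸ Algebra.mem_top
  induction ha using Algebra.adjoin_induction with
  | mem _ hg =>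
    obtain ⟨k, rfl⟩ := hg
    fin_cases k
    · exact (lift_qpx h).symm ▸ hx
    · exact (lift_qpy h).symm ▸ hy
  | algebraMap c =>
    rw [AlgHom.commutes]
    exact Algebra.commutes c e
  | add a b _ _ ha hb =>
    rw [map_add]
    exact ha.add_left hb
  | mul a b _ _ ha hb =>
    rw [map_mul]
    exact ha.mul_left hb

end Lift

section Representation

variable (V : Type*) [AddCommMonoid V] [Module ℂ V]

/-- Multiplication by the coordinate on `V`-valued functions on `ℂ`. -/
def coordMul : Module.End ℂ (ℂ → V) :=
  LinearMap.pi fun c => c • LinearMap.proj c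

/-- The `q`-dilation operator `f ↦ f (q * ·)` on `V`-valued functions on `ℂ`. -/
def dilation (q : ℂ) : Module.End ℂ (ℂ → V) :=
  LinearMap.funLeft ℂ V (q * ·)

theorem dilation_mul_coordMul (q : ℂ) :
    dilation V q * coordMul V = q • (coordMul V * dilation V q) := by
  ext f c
  exact mul_smul q c _

variable {V}

theorem coordMul_pow_apply (k : ℕ) (f : ℂ → V) (c : ℂ) :
    (coordMul V ^ k) f c = c ^ k • f c := by
  induction k with
  | zero => simp
  | succ k ih =>
    rw [pow_succ', Module.End.mul_apply, pow_succ', mul_smul, ← ih]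
    rfl

theorem commute_coordMul_lsmul (g : Module.End ℂ V) :
    Commute (coordMul V) (Algebra.lsmul ℂ ℂ (ℂ → V) g) := by
  ext f c
  exact (g.map_smul c (f c)).symm

theorem commute_dilation_lsmul (q : ℂ) (g : Module.End ℂ V) :
    Commute (dilation V q) (Algebra.lsmul ℂ ℂ (ℂ → V) g) :=
  rfl

end Representation

end QPlane

section Twist

variable {A B : Type*} [Semiring A] [Algebra ℂ A] [Semiring B] [Algebra ℂ B] {q : ℂ}

/-- The representation of `QPlane q ⊗ B` on functions `ℂ → V` in which the quantum plane acts by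
`q`-difference operators and `B` acts on values through `ρ`. -/
def qDifferenceRep {V : Type*} [AddCommMonoid V] [Module ℂ V] (q : ℂ) (ρ : B →ₐ[ℂ] Module.End ℂ V) :
    QPlane q ⊗[ℂ] B →ₐ[ℂ] Module.End ℂ (ℂ → V) :=
  Algebra.TensorProduct.lift (QPlane.lift (QPlane.dilation_mul_coordMul V q))
    ((Algebra.lsmul ℂ ℂ (ℂ → V)).comp ρ) fun a b => by
      rw [AlgHom.comp_apply]
      exact QPlane.commute_lift _ (QPlane.commute_coordMul_lsmul (ρ b))
        (QPlane.commute_dilation_lsmul q (ρ b)) a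

theorem qDifferenceRep_tmul_apply {V : Type*} [AddCommMonoid V] [Module ℂ V]
    (ρ : B →ₐ[ℂ] Module.End ℂ V) (k : ℕ) (b : B) (f : ℂ → V) (c : ℂ) :
    qDifferenceRep q ρ ((qpx q ^ k * qpy q) ⊗ₜ b) f c = c ^ k • ρ b (f (q * c)) := by
  simp only [qDifferenceRep, Algebra.TensorProduct.lift_tmul, map_mul, map_pow, QPlane.lift_qpx,
    QPlane.lift_qpy, Module.End.mul_apply, QPlane.coordMul_pow_apply]
  rfl

variable {ι : Type*} {a : ι → A} {b : ι → B} {d : ι → ℕ} {σ : ℂ →* (A →ₐ[ℂ] A)}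
  {ρ : B →ₐ[ℂ] Module.End ℂ A} {φ : A →ₐ[ℂ] QPlane q ⊗[ℂ] B}

theorem qDifferenceRep_orbit (hq : q ≠ 0) (ha : Algebra.adjoin ℂ (Set.range a) = ⊤)
    (hσ : ∀ c i, σ c (a i) = c ^ d i • a i) (hρ : ∀ i r, ρ (b i) r = a i * σ q⁻¹ r)
    (hφ : ∀ i, φ (a i) = (qpx q ^ d i * qpy q) ⊗ₜ b i) (r s : A) :
    qDifferenceRep q ρ (φ r) (fun c => σ c s) = fun c => σ c (r * s) := by
  have hr : r ∈ Algebra.adjoin ℂ (Set.range a) := ha ▸ Algebra.mem_top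
  induction hr using Algebra.adjoin_induction generalizing s with
  | mem _ hg =>
    obtain ⟨i, rfl⟩ := hg
    funext c
    have hσ_inv : σ q⁻¹ (σ (q * c) s) = σ c s := by
      rw [← AlgHom.mul_apply, ← map_mul, inv_mul_cancel_left₀ hq]
    rw [hφ, qDifferenceRep_tmul_apply, hρ, hσ_inv, map_mul, hσ, smul_mul_assoc]
  | algebraMap z =>
    funext c
    simp only [AlgHom.commutes, Module.algebraMap_end_apply, Pi.smul_apply, map_mul,
      Algebra.smul_def]
  | add r₁ r₂ _ _ h₁ h₂ =>
    funext c
    simp only [map_add, LinearMap.add_apply, h₁, h₂, Pi.add_apply, add_mul]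
  | mul r₁ r₂ _ _ h₁ h₂ => rw [map_mul, map_mul, Module.End.mul_apply, h₂, h₁, mul_assoc]

theorem injective_of_twisted_regular_rep (hq : q ≠ 0) (ha : Algebra.adjoin ℂ (Set.range a) = ⊤)
    (hσ : ∀ c i, σ c (a i) = c ^ d i • a i) (hρ : ∀ i r, ρ (b i) r = a i * σ q⁻¹ r)
    (hφ : ∀ i, φ (a i) = (qpx q ^ d i * qpy q) ⊗ₜ b i) : Function.Injective φ := by
  have recover (r : A) : qDifferenceRep q ρ (φ r) (fun c => σ c 1) 1 = r := by
    rw [qDifferenceRep_orbit hq ha hσ hρ hφ, mul_one]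
    exact AlgHom.congr_fun (map_one σ) r
  intro r s h
  rw [← recover r, h, recover s]

end Twist

/-- The degree of the generators with indices `(i, j)` of `J^0_q(n)` and `J^z_q(n)`. It is the sum
of the 1-based indices, whereas elements of `Fin n` count from `0`. -/
def genDegree {n : ℕ} (i j : Fin n) : ℕ := (i : ℕ) + (j : ℕ) + 2

/-- The relations interpolating between those of `J^z_q(n)`, at `e = 0`, and those of `J^0_q(n)`, at
`e = 1`: increasing `e` by `1` corresponds to multiplying the product of two generators by `q` to
the degree of the right factor. -/
structure IsTwistedQuantumMatrix {K E : Type*} [Field K] [Semiring E] [Algebra K E] {n : ℕ}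
    (q : K) (e : ℤ) (u : Fin n → Fin n → E) : Prop where
  comm : ∀ i j s t : Fin n, ((s : ℤ) - i) * ((t : ℤ) - j) ≤ 0 →
    u i j * u s t = q ^ (e * ((s : ℤ) + t - i - j)) • (u s t * u i j)
  cross : ∀ i j s t : Fin n, i < s → j < t →
    q ^ (1 - e * ((t : ℤ) - j)) • (u i j * u s t) =
      q ^ (e * ((s : ℤ) - i) - 1) • (u s t * u i j) + (q - q⁻¹) • (u i t * u s j)

theorem IsTwistedQuantumMatrix.twist {K E F : Type*} [Field K] [Semiring E] [Algebra K E]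
    [Semiring F] [Algebra K F] {n : ℕ} {q : K} {e : ℤ} {u : Fin n → Fin n → E}
    (hu : IsTwistedQuantumMatrix q e u) (hq : q ≠ 0) (f : ℤ) {v : Fin n → Fin n → F}
    (L : ℕ → E →ₗ[K] F)
    (hv : ∀ i j s t, v i j * v s t =
      q ^ (f * genDegree s t) • L (genDegree i j + genDegree s t) (u i j * u s t)) :
    IsTwistedQuantumMatrix q (e + f) v where
  comm i j s t h := by
    rw [hv, hv, hu.comm i j s t h, map_smul, smul_smul, smul_smul, ← zpow_add₀ hq,
      ← zpow_add₀ hq, add_comm (genDegree s t)]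
    congr 2
    simp only [genDegree]
    push_cast
    ring
  cross i j s t hs ht := by
    have degree_swap : genDegree i t + genDegree s j = genDegree i j + genDegree s t := by
      simp only [genDegree]
      ring
    have left_exponent : 1 - (e + f) * ((t : ℤ) - j) + f * genDegree s t =
        f * genDegree s j + (1 - e * ((t : ℤ) - j)) := by
      simp only [genDegree]
      push_cast
      ring
    have right_exponent : (e + f) * ((s : ℤ) - i) - 1 + f * genDegree i j =
        f * genDegree s j + (e * ((s : ℤ) - i) - 1) := by
      simp only [genDegree]
      push_cast
      ring
    rw [hv, hv, hv, degree_swap, add_comm (genDegree s t), smul_smul, smul_smul, ← zpow_add₀ hq,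
      ← zpow_add₀ hq, left_exponent, right_exponent, zpow_add₀ hq, zpow_add₀ hq,
      smul_comm (q - q⁻¹), mul_smul, mul_smul, ← smul_add]
    simp only [← map_smul, ← map_add, hu.cross i j s t hs ht]

theorem isTwistedQuantumMatrix_mgen (n : ℕ) (q : ℂ) :
    IsTwistedQuantumMatrix q 0 (mgen n q) where
  comm i j s t h := by
    simpa [mgen] using RingQuot.mkAlgHom_rel ℂ (JzRel.comm (q := q) i j s t h)
  cross i j s t hs ht := by
    simpa [mgen, -map_sub] using RingQuot.mkAlgHom_rel ℂ (JzRel.cross (q := q) i j s t hs ht)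

theorem isTwistedQuantumMatrix_jgen (n : ℕ) (q : ℂ) :
    IsTwistedQuantumMatrix q 1 (jgen n q) where
  comm i j s t h := by
    simpa only [jgen, map_mul, map_smul, one_mul] using
      RingQuot.mkAlgHom_rel ℂ (J0Rel.comm (q := q) i j s t h)
  cross i j s t hs ht := by
    simpa only [jgen, map_mul, map_smul, map_add, one_mul, sub_add] using
      RingQuot.mkAlgHom_rel ℂ (J0Rel.cross (q := q) i j s t hs ht)

section Lift

variable {E : Type*} [Semiring E] [Algebra ℂ E] {n : ℕ} {q : ℂ} {u : Fin n → Fin n → E}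

/-- The universal property of `J^z_q(n)`: the homomorphism sending `M_{i,j}` to `u i j`. -/
def JzAlg.lift (hu : IsTwistedQuantumMatrix q 0 u) : JzAlg n q →ₐ[ℂ] E :=
  RingQuot.liftAlgHom ℂ ⟨FreeAlgebra.lift ℂ fun p => u p.1 p.2, by
    rintro _ _ (⟨i, j, s, t, h⟩ | ⟨i, j, s, t, hs, ht⟩)
    · simpa using hu.comm i j s t h
    · simpa using hu.cross i j s t hs ht⟩

@[simp]
theorem JzAlg.lift_mgen (hu : IsTwistedQuantumMatrix q 0 u) (i j : Fin n) :
    JzAlg.lift hu (mgen n q i j) = u i j := by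
  simp [JzAlg.lift, mgen]

/-- The universal property of `J^0_q(n)`: the homomorphism sending `J_{i,j}` to `u i j`. -/
def J0Alg.lift (hu : IsTwistedQuantumMatrix q 1 u) : J0Alg n q →ₐ[ℂ] E :=
  RingQuot.liftAlgHom ℂ ⟨FreeAlgebra.lift ℂ fun p => u p.1 p.2, by
    rintro _ _ (⟨i, j, s, t, h⟩ | ⟨i, j, s, t, hs, ht⟩)
    · simpa using hu.comm i j s t h
    · simpa [sub_add] using hu.cross i j s t hs ht⟩

@[simp]
theorem J0Alg.lift_jgen (hu : IsTwistedQuantumMatrix q 1 u) (i j : Fin n) :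
    J0Alg.lift hu (jgen n q i j) = u i j := by
  simp [J0Alg.lift, jgen]

end Lift

namespace J0Alg

theorem adjoin_range_jgen (n : ℕ) (q : ℂ) :
    Algebra.adjoin ℂ (Set.range fun p : Fin n × Fin n => jgen n q p.1 p.2) = ⊤ :=
  adjoin_range_mkAlgHom_ι (J0Rel n q)

theorem algHom_ext {E : Type*} [Semiring E] [Algebra ℂ E] {n : ℕ} {q : ℂ}
    {f g : J0Alg n q →ₐ[ℂ] E} (h : ∀ i j, f (jgen n q i j) = g (jgen n q i j)) : f = g :=
  AlgHom.ext_of_adjoin_eq_top (adjoin_range_jgen n q) (Set.forall_mem_range.mpr fun p => h p.1 p.2)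

variable {n : ℕ} {q : ℂ}

theorem isTwistedQuantumMatrix_smul_jgen (hq : q ≠ 0) (c : ℂ) :
    IsTwistedQuantumMatrix q 1 fun i j => c ^ genDegree i j • jgen n q i j :=
  (isTwistedQuantumMatrix_jgen n q).twist hq 0 (fun k => c ^ k • LinearMap.id) fun i j s t => by
    simp [smul_smul, pow_add, mul_comm]

/-- The action of the multiplicative monoid `ℂ` on `J^0_q(n)` encoding its grading: `c` multiplies
elements of degree `k` by `c ^ k`. -/
def scale (hq : q ≠ 0) : ℂ →* (J0Alg n q →ₐ[ℂ] J0Alg n q) where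
  toFun c := lift (isTwistedQuantumMatrix_smul_jgen hq c)
  map_one' := algHom_ext fun i j => by simp
  map_mul' c c' := algHom_ext fun i j => by simp [mul_pow, smul_smul, mul_comm]

theorem scale_jgen (hq : q ≠ 0) (c : ℂ) (i j : Fin n) :
    scale hq c (jgen n q i j) = c ^ genDegree i j • jgen n q i j :=
  lift_jgen _ i j

theorem isTwistedQuantumMatrix_tmul (n : ℕ) (hq : q ≠ 0) :
    IsTwistedQuantumMatrix q 1 fun i j : Fin n =>
      (qpx q ^ genDegree i j * qpy q) ⊗ₜ[ℂ] mgen n q i j :=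
  (isTwistedQuantumMatrix_mgen n q).twist hq 1
    (fun k => TensorProduct.mk ℂ _ _ (qpx q ^ k * qpy q ^ 2)) fun i j s t => by
      rw [Algebra.TensorProduct.tmul_mul_tmul, QPlane.qpx_pow_mul_qpy_mul, one_mul, zpow_natCast,
        TensorProduct.mk_apply, TensorProduct.smul_tmul']

end J0Alg

namespace JzAlg

variable {q : ℂ}

theorem isTwistedQuantumMatrix_lmul_mul_scale (n : ℕ) (hq : q ≠ 0) :
    IsTwistedQuantumMatrix q 0 fun i j : Fin n =>
      Algebra.lmul ℂ (J0Alg n q) (jgen n q i j) * (J0Alg.scale hq q⁻¹).toLinearMap :=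
  (isTwistedQuantumMatrix_jgen n q).twist hq (-1)
    (fun _ => LinearMap.mulRight ℂ ((J0Alg.scale hq q⁻¹).toLinearMap ^ 2) ∘ₗ
      (Algebra.lmul ℂ (J0Alg n q)).toLinearMap) fun i j s t => by
    ext r
    simp [J0Alg.scale_jgen, sq, mul_assoc]

/-- The regular representation of `J^0_q(n)` twisted into a representation of `J^z_q(n)`, with
`M_{i,j}` acting by `r ↦ J_{i,j} σ(r)` where `σ` is scaling by `q⁻¹`. -/
def twistedRegularRep (n : ℕ) (hq : q ≠ 0) : JzAlg n q →ₐ[ℂ] Module.End ℂ (J0Alg n q) :=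
  lift (isTwistedQuantumMatrix_lmul_mul_scale n hq)

theorem twistedRegularRep_mgen (n : ℕ) (hq : q ≠ 0) (i j : Fin n) (r : J0Alg n q) :
    twistedRegularRep n hq (mgen n q i j) r = jgen n q i j * J0Alg.scale hq q⁻¹ r := by
  simp [twistedRegularRep]

end JzAlg

theorem stmt8 (n : ℕ) (q : ℂ) (hq : q ≠ 0) :
    ∃ φ : J0Alg n q →ₐ[ℂ] (QPlane q ⊗[ℂ] JzAlg n q),
      Function.Injective φ ∧
        ∀ i j : Fin n,
          φ (jgen n q i j) =
            (qpx q ^ ((i : ℕ) + (j : ℕ) + 2) * qpy q) ⊗ₜ[ℂ] mgen n q i j := by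
  have hφ := J0Alg.lift_jgen (J0Alg.isTwistedQuantumMatrix_tmul n hq)
  refine ⟨J0Alg.lift (J0Alg.isTwistedQuantumMatrix_tmul n hq), ?_, hφ⟩
  exact injective_of_twisted_regular_rep hq (J0Alg.adjoin_range_jgen n q)
    (fun c p => J0Alg.scale_jgen hq c p.1 p.2)
    (fun p => JzAlg.twistedRegularRep_mgen n hq p.1 p.2) (fun p => hφ p.1 p.2)
end
end
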